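/- Let X be an n×p matrix whose rows are i.i.d. N(0, Σ), partitioned as columns X_S and X_{S^c} for S ⊆ {1,…,p}, and let ε̃ = X_{S^c}β_{S^c} + ε with ε ~ N(0, σ²I_n) independent of X. Then for each j ∈ S^c, the conditional distribution of X_j given (X_S, ε̃) equals X_S a_j + b_j W + Z_j, where a_j = Σ_{SS}^{-1}Σ_{Sj}, b_j = e_jᵀ Σ_{S^c|S} β_{S^c} / √d with d = σ² + β_{S^c}ᵀΣ_{S^c|S}β_{S^c}, W ~ N(0, I_n) depends only on (X_S, ε̃), and Z_j ~ N(0, σ̃_{jj} I_n) is independent of (X_S, ε̃) with σ̃_{jj} = Σ_{jj} − a_jᵀΣ_{SS}a_j − b_j² ≤ Σ_{jj}. -/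

import Mathlib

open MeasureTheory ProbabilityTheory Matrix

/-!
Regress every variable on `X_S`. The residuals are uncorrelated with `X_S` and have covariance
matrix the Schur complement `Σ_{Sᶜ|S}`, enlarged by `σ²` for the noise. `W` is the standardized
residual of `ε̃`, so it is a function of `(X_S, ε̃)`, and a Gram–Schmidt step splits the residual of
`X_j` into its component `b_j W` along `W` and a remainder `Z`. By construction `Z` is uncorrelated
with `(X_S, ε̃)`, hence independent of it because everything is jointly Gaussian.
-/

/-- The random matrix with rows `X i` has i.i.d. rows with law `N(0, Γ)`. The law of a row is
encoded by joint Gaussianity, zero mean and covariance matrix `Γ`; the last field makes `Γ` a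
covariance matrix even when there are no rows. -/
structure IsGaussianDesign {Ω ι κ : Type*} [MeasurableSpace Ω] [Fintype κ]
    (X : ι → Ω → κ → ℝ) (Γ : Matrix κ κ ℝ) (μ : Measure Ω) : Prop where
  iIndepFun : iIndepFun X μ
  hasGaussianLaw : ∀ i, HasGaussianLaw (X i) μ
  integral_eq_zero : ∀ i k, ∫ ω, X i ω k ∂μ = 0
  covariance_eq : ∀ i k l, cov[fun ω => X i ω k, fun ω => X i ω l; μ] = Γ k l
  posSemidef : Γ.PosSemidef

namespace IsGaussianDesign

variable {Ω ι κ : Type*} [MeasurableSpace Ω] [Fintype κ] {μ : Measure Ω}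
  {X : ι → Ω → κ → ℝ} {Γ : Matrix κ κ ℝ}

lemma isSymm (hX : IsGaussianDesign X Γ μ) : Γ.IsSymm :=
  isHermitian_iff_isSymm.1 hX.posSemidef.isHermitian

lemma memLp_two (hX : IsGaussianDesign X Γ μ) (i : ι) (k : κ) : MemLp (fun ω => X i ω k) 2 μ :=
  ((hX.hasGaussianLaw i).eval k).memLp_two

lemma hasGaussianLaw_dotProduct (hX : IsGaussianDesign X Γ μ) (i : ι) (u : κ → ℝ) :
    HasGaussianLaw (fun ω => X i ω ⬝ᵥ u) μ :=
  (hX.hasGaussianLaw i).map_fun ((dotProductBilin ℝ ℝ).flip u).toContinuousLinearMap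

lemma integral_dotProduct (hX : IsGaussianDesign X Γ μ) (i : ι) (u : κ → ℝ) :
    ∫ ω, X i ω ⬝ᵥ u ∂μ = 0 := by
  have := (hX.hasGaussianLaw i).isProbabilityMeasure
  simp only [dotProduct]
  rw [integral_finsetSum _ fun k _ => ((hX.memLp_two i k).integrable one_le_two).mul_const _]
  simp [integral_mul_const, hX.integral_eq_zero]

lemma covariance_dotProduct (hX : IsGaussianDesign X Γ μ) (i : ι) (u v : κ → ℝ) :
    cov[fun ω => X i ω ⬝ᵥ u, fun ω => X i ω ⬝ᵥ v; μ] = u ⬝ᵥ Γ *ᵥ v := by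
  have := (hX.hasGaussianLaw i).isProbabilityMeasure
  simp only [dotProduct, mulVec, Finset.mul_sum]
  rw [covariance_fun_sum_fun_sum (fun k => (hX.memLp_two i k).mul_const _)
    (fun k => (hX.memLp_two i k).mul_const _)]
  refine Finset.sum_congr rfl fun k _ => Finset.sum_congr rfl fun l _ => ?_
  rw [covariance_mul_const_left, covariance_mul_const_right, hX.covariance_eq]
  ring

lemma covariance_dotProduct_of_ne (hX : IsGaussianDesign X Γ μ) {i i' : ι} (hi : i ≠ i')
    (u v : κ → ℝ) : cov[fun ω => X i ω ⬝ᵥ u, fun ω => X i' ω ⬝ᵥ v; μ] = 0 := by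
  have hind : IndepFun (fun ω => X i ω ⬝ᵥ u) (fun ω => X i' ω ⬝ᵥ v) μ :=
    (hX.iIndepFun.indepFun hi).comp (φ := (· ⬝ᵥ u)) (ψ := (· ⬝ᵥ v))
      (by unfold dotProduct; fun_prop) (by unfold dotProduct; fun_prop)
  exact hind.covariance_eq_zero (hX.hasGaussianLaw_dotProduct i u).memLp_two
    (hX.hasGaussianLaw_dotProduct i' v).memLp_two

lemma map_dotProduct [Fintype ι] (hX : IsGaussianDesign X Γ μ) (u : κ → ℝ) :
    μ.map (fun ω i => X i ω ⬝ᵥ u) =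
      Measure.pi fun _ => gaussianReal 0 (u ⬝ᵥ Γ *ᵥ u).toNNReal := by
  have hind : ProbabilityTheory.iIndepFun (fun i ω => X i ω ⬝ᵥ u) μ :=
    hX.iIndepFun.comp (fun _ => (· ⬝ᵥ u)) fun _ => by unfold dotProduct; fun_prop
  have hgauss := hX.hasGaussianLaw_dotProduct (u := u)
  rw [hind.map_fun_eq_pi_map fun i => (hgauss i).aemeasurable]
  congr with i : 1
  rw [(hgauss i).map_eq_gaussianReal, hX.integral_dotProduct,
    ← covariance_self (hgauss i).aemeasurable, hX.covariance_dotProduct]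

lemma indepFun_dotProduct [Finite ι] {τ : Type*} [Finite τ] (hX : IsGaussianDesign X Γ μ)
    {u : κ → ℝ} {v : τ → κ → ℝ} (huv : ∀ t, v t ⬝ᵥ Γ *ᵥ u = 0) :
    IndepFun (fun ω i => X i ω ⬝ᵥ u) (fun ω (q : ι × τ) => X q.1 ω ⬝ᵥ v q.2) μ := by
  have := Fintype.ofFinite ι
  have := Fintype.ofFinite τ
  have hjoint : HasGaussianLaw (fun ω i => X i ω) μ := hX.iIndepFun.hasGaussianLaw hX.hasGaussianLaw
  let dot (w : κ → ℝ) (i : ι) : (ι → κ → ℝ) →L[ℝ] ℝ :=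
    ((dotProductBilin ℝ ℝ).flip w).toContinuousLinearMap ∘L .proj i
  have hgauss := hjoint.map_fun
    ((ContinuousLinearMap.pi (dot u)).prod (.pi fun q : ι × τ => dot (v q.2) q.1))
  refine hgauss.indepFun_of_covariance_eval fun i q => ?_
  change cov[fun ω => X i ω ⬝ᵥ u, fun ω => X q.1 ω ⬝ᵥ v q.2; μ] = 0
  obtain rfl | hi := eq_or_ne i q.1
  · rw [covariance_comm, hX.covariance_dotProduct, huv]
  · exact hX.covariance_dotProduct_of_ne hi _ _

lemma vecMul {κ' : Type*} [Fintype κ'] (hX : IsGaussianDesign X Γ μ) (M : Matrix κ κ' ℝ) :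
    IsGaussianDesign (fun i ω => X i ω ᵥ* M) (Mᵀ * Γ * M) μ where
  iIndepFun := hX.iIndepFun.comp (fun _ => (· ᵥ* M)) fun _ => by
    unfold Matrix.vecMul dotProduct; fun_prop
  hasGaussianLaw i := (hX.hasGaussianLaw i).map_fun M.vecMulLinear.toContinuousLinearMap
  integral_eq_zero i k := hX.integral_dotProduct i _
  covariance_eq i k l := by
    rw [Matrix.mul_assoc]
    exact hX.covariance_dotProduct i _ _
  posSemidef := by simpa using hX.posSemidef.conjTranspose_mul_mul_same M

lemma comp_right {κ' : Type*} [Fintype κ'] (hX : IsGaussianDesign X Γ μ) (f : κ' → κ) :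
    IsGaussianDesign (fun i ω => X i ω ∘ f) (Γ.submatrix f f) μ where
  iIndepFun := hX.iIndepFun.comp (fun _ => (· ∘ f)) fun _ => by
    unfold Function.comp; fun_prop
  hasGaussianLaw i := (hX.hasGaussianLaw i).map_fun (.pi fun k => .proj (f k))
  integral_eq_zero i k := hX.integral_eq_zero i (f k)
  covariance_eq i k l := hX.covariance_eq i (f k) (f l)
  posSemidef := hX.posSemidef.submatrix f

end IsGaussianDesign

lemma isGaussianDesign_one_of_iIndepFun {Ω ι κ : Type*} [MeasurableSpace Ω] {μ : Measure Ω}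
    [Finite ι] [Fintype κ] [DecidableEq κ] {V : ι × κ → Ω → ℝ} (hind : iIndepFun V μ)
    (hlaw : ∀ q, HasLaw (V q) (gaussianReal 0 1) μ) :
    IsGaussianDesign (fun i ω k => V (i, k) ω) 1 μ where
  iIndepFun := by
    have := Fintype.ofFinite ι
    have hgauss : HasGaussianLaw (fun ω q => V q ω) μ :=
      hind.hasGaussianLaw fun q => (hlaw q).hasGaussianLaw
    have hrows : HasGaussianLaw (fun ω i k => V (i, k) ω) μ :=
      hgauss.map_fun
        (.pi fun i => .pi fun k => .proj (i, k) : (ι × κ → ℝ) →L[ℝ] ι → κ → ℝ)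
    refine hrows.iIndepFun_of_covariance_eval (X := fun i k => V (i, k)) fun i i' hi k l => ?_
    have hne : (i, k) ≠ (i', l) := fun h => hi (congrArg Prod.fst h)
    exact (hind.indepFun hne).covariance_eq_zero (hgauss.eval _).memLp_two
      (hgauss.eval _).memLp_two
  hasGaussianLaw i :=
    (hind.precomp (Prod.mk_right_injective i)).hasGaussianLaw fun k => (hlaw (i, k)).hasGaussianLaw
  integral_eq_zero i k := by simpa using (hlaw (i, k)).integral_eq
  covariance_eq i k l := by
    obtain rfl | hkl := eq_or_ne k l
    · rw [covariance_self (hlaw (i, k)).aemeasurable, one_apply_eq]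
      simpa using (hlaw (i, k)).variance_eq
    · have hne : (i, k) ≠ (i, l) := fun h => hkl (congrArg Prod.snd h)
      rw [one_apply_ne hkl]
      exact (hind.indepFun hne).covariance_eq_zero (hlaw _).hasGaussianLaw.memLp_two
        (hlaw _).hasGaussianLaw.memLp_two
  posSemidef := .one

lemma isGaussianDesign_linearModel_of_map_eq_pi {Ω ι κ κ' : Type*} [MeasurableSpace Ω]
    {μ : Measure Ω} [Fintype ι] [Fintype κ] [Fintype κ'] {V : (ι × κ) ⊕ ι → Ω → ℝ}
    (hlaw : μ.map (fun ω q => V q ω) = Measure.pi fun _ => gaussianReal 0 1)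
    (B : Matrix κ κ' ℝ) (σ : ℝ) :
    IsGaussianDesign
      (fun i ω => Sum.elim (((of fun i l => V (.inl (i, l)) ω) * B) i)
        fun _ : Unit => σ * V (.inr i) ω)
      (fromBlocks (Bᵀ * B) 0 0 (σ ^ 2 • 1)) μ := by
  classical
  have hV : HasLaw (fun ω q => V q ω) (Measure.pi fun _ => gaussianReal 0 1) μ :=
    ⟨.of_map_ne_zero (hlaw ▸ IsProbabilityMeasure.ne_zero _), hlaw⟩
  have hcoord : ∀ q, HasLaw (V q) (gaussianReal 0 1) μ := fun q =>
    (measurePreserving_eval (fun _ => gaussianReal 0 1) q).hasLaw.comp hV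
  have hind : iIndepFun V μ :=
    have := hV.isProbabilityMeasure_iff.2 inferInstance
    (iIndepFun_iff_hasLaw_pi_pi hcoord).2 hV
  let e : ι × (κ ⊕ Unit) ≃ (ι × κ) ⊕ ι :=
    (Equiv.prodSumDistrib ι κ Unit).trans ((Equiv.refl _).sumCongr (Equiv.prodPUnit ι))
  have hstd := isGaussianDesign_one_of_iIndepFun (hind.precomp e.injective) fun q => hcoord (e q)
  convert hstd.vecMul (fromBlocks B 0 0 (σ • (1 : Matrix Unit Unit ℝ))) using 1
  · ext i ω (k | k)
    · simp [Matrix.vecMul, dotProduct, Matrix.mul_apply, e]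
    · simp [Matrix.vecMul, dotProduct, e, mul_comm]
  · simp [fromBlocks_transpose, fromBlocks_multiply, smul_smul, sq]

lemma dotProduct_sumElim {m o : Type*} [Fintype m] [Fintype o] (x : m ⊕ o → ℝ) (s : m → ℝ)
    (t : o → ℝ) : x ⬝ᵥ Sum.elim s t = x ∘ Sum.inl ⬝ᵥ s + x ∘ Sum.inr ⬝ᵥ t := by
  rw [← sumElim_dotProduct_sumElim, Sum.elim_comp_inl_inr]

section SchurComplement

variable {m o : Type*} [Fintype m] [DecidableEq m]

/-- The Schur complement `Γ₂₂ − Γ₂₁ Γ₁₁⁻¹ Γ₁₂` of the first diagonal block of a block matrix,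
meaningful when `Γ₁₁` is invertible. If `Γ` is the covariance matrix of a Gaussian vector
`(x₁, x₂)`, it is the conditional covariance of `x₂` given `x₁`. -/
noncomputable def schurComplement (Γ : Matrix (m ⊕ o) (m ⊕ o) ℝ) : Matrix o o ℝ :=
  Γ.toBlocks₂₂ - Γ.toBlocks₂₁ * Γ.toBlocks₁₁⁻¹ * Γ.toBlocks₁₂

variable {Γ : Matrix (m ⊕ o) (m ⊕ o) ℝ}

lemma isSymm_schurComplement (hΓ : Γ.IsSymm) : (schurComplement Γ).IsSymm := by
  rw [← Γ.fromBlocks_toBlocks, isSymm_fromBlocks_iff] at hΓ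
  obtain ⟨h₁₁, h₁₂, h₂₁, h₂₂⟩ := hΓ
  simp [schurComplement, IsSymm, transpose_nonsing_inv, h₁₁.eq, h₁₂, h₂₁, h₂₂.eq, Matrix.mul_assoc]

lemma posSemidef_schurComplement [Finite o] (hΓ : Γ.PosSemidef) (hA : IsUnit Γ.toBlocks₁₁.det) :
    (schurComplement Γ).PosSemidef := by
  have hpd : Γ.toBlocks₁₁.PosDef :=
    (hΓ.submatrix Sum.inl).posDef_iff_isUnit.2 ((isUnit_iff_isUnit_det _).2 hA)
  have := hpd.isUnit.invertible
  have h₂₁ : Γ.toBlocks₂₁ = Γ.toBlocks₁₂ᴴ := by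
    ext k l
    exact (hΓ.isHermitian.apply (.inr k) (.inl l)).symm
  rw [schurComplement, h₂₁, ← hpd.fromBlocks₁₁, ← h₂₁, Γ.fromBlocks_toBlocks]
  exact hΓ

lemma schurComplement_apply_self (hA : IsUnit Γ.toBlocks₁₁.det) (hΓ : Γ.IsSymm) {a : m → ℝ}
    {k : o} (ha : a = Γ.toBlocks₁₁⁻¹ *ᵥ fun i => Γ (.inl i) (.inr k)) :
    schurComplement Γ k k = Γ (.inr k) (.inr k) - a ⬝ᵥ Γ.toBlocks₁₁ *ᵥ a := by
  have hnormal : Γ.toBlocks₁₁ *ᵥ a = fun i => Γ (.inr k) (.inl i) := by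
    rw [ha, mulVec_mulVec, mul_nonsing_inv _ hA, one_mulVec]
    exact funext fun i => hΓ.apply _ _
  rw [hnormal, dotProduct_comm, ha, schurComplement, Matrix.mul_assoc]
  rfl

lemma schurComplement_submatrix_sumAssoc {q : Type*} (E : Matrix q q ℝ) :
    schurComplement ((fromBlocks Γ 0 0 E).submatrix (Equiv.sumAssoc m o q).symm
      (Equiv.sumAssoc m o q).symm) = fromBlocks (schurComplement Γ) 0 0 E := by
  ext (k | k) (l | l)
  · rfl
  · simp [schurComplement, Matrix.mul_apply, toBlocks₁₂, toBlocks₂₂]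
  · simp [schurComplement, Matrix.mul_apply, toBlocks₂₁, toBlocks₂₂]
  · simp [schurComplement, Matrix.mul_apply, toBlocks₂₁, toBlocks₁₂, toBlocks₂₂]

end SchurComplement

section RegressionResidual

variable {m o : Type*} [Fintype m] [DecidableEq m] [Fintype o]
  {Γ : Matrix (m ⊕ o) (m ⊕ o) ℝ}

/-- The weights of the linear combination of the coordinates of a centred vector `(x₁, x₂)` with
covariance matrix `Γ` that gives the residual of `x₂ ⬝ᵥ u` after regression on `x₁`. -/
noncomputable def regressionResidual (Γ : Matrix (m ⊕ o) (m ⊕ o) ℝ) (u : o → ℝ) : m ⊕ o → ℝ :=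
  Sum.elim (-(Γ.toBlocks₁₁⁻¹ *ᵥ Γ.toBlocks₁₂ *ᵥ u)) u

lemma dotProduct_regressionResidual (x : m ⊕ o → ℝ) (u : o → ℝ) :
    x ⬝ᵥ regressionResidual Γ u =
      x ∘ Sum.inr ⬝ᵥ u - x ∘ Sum.inl ⬝ᵥ Γ.toBlocks₁₁⁻¹ *ᵥ Γ.toBlocks₁₂ *ᵥ u := by
  rw [regressionResidual, dotProduct_sumElim, dotProduct_neg, neg_add_eq_sub]

lemma mulVec_regressionResidual (hA : IsUnit Γ.toBlocks₁₁.det) (u : o → ℝ) :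
    Γ *ᵥ regressionResidual Γ u = Sum.elim (0 : m → ℝ) (schurComplement Γ *ᵥ u) := by
  conv_lhs => rw [← Γ.fromBlocks_toBlocks, regressionResidual, fromBlocks_mulVec]
  simp [schurComplement, mulVec_neg, mulVec_mulVec, mul_nonsing_inv_cancel_left _ _ hA,
    sub_mulVec, Matrix.mul_assoc, neg_add_eq_sub]

lemma regressionResidual_dotProduct_mulVec (hA : IsUnit Γ.toBlocks₁₁.det) (u v : o → ℝ) :
    regressionResidual Γ u ⬝ᵥ Γ *ᵥ regressionResidual Γ v = u ⬝ᵥ schurComplement Γ *ᵥ v := by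
  rw [mulVec_regressionResidual hA, regressionResidual, sumElim_dotProduct_sumElim,
    dotProduct_zero, zero_add]

end RegressionResidual

section GramSchmidt

variable {o : Type*} [Fintype o] {N : Matrix o o ℝ} {u : o → ℝ}

lemma dotProduct_mulVec_comm_of_isSymm (hN : N.IsSymm) (u v : o → ℝ) :
    u ⬝ᵥ N *ᵥ v = v ⬝ᵥ N *ᵥ u := by
  rw [dotProduct_mulVec, ← mulVec_transpose, hN.eq, dotProduct_comm]

lemma dotProduct_mulVec_sub_projection (hN : N.IsSymm) (hu : u ⬝ᵥ N *ᵥ u ≠ 0) (v : o → ℝ) :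
    u ⬝ᵥ N *ᵥ (v - ((v ⬝ᵥ N *ᵥ u) / (u ⬝ᵥ N *ᵥ u)) • u) = 0 := by
  rw [mulVec_sub, mulVec_smul, dotProduct_sub, dotProduct_smul, smul_eq_mul,
    div_mul_cancel₀ _ hu, dotProduct_mulVec_comm_of_isSymm hN, sub_self]

lemma sub_projection_dotProduct_mulVec_self (hN : N.IsSymm) (hu : 0 < u ⬝ᵥ N *ᵥ u) (v : o → ℝ) :
    (v - ((v ⬝ᵥ N *ᵥ u) / (u ⬝ᵥ N *ᵥ u)) • u) ⬝ᵥ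
        N *ᵥ (v - ((v ⬝ᵥ N *ᵥ u) / (u ⬝ᵥ N *ᵥ u)) • u) =
      v ⬝ᵥ N *ᵥ v - ((v ⬝ᵥ N *ᵥ u) / √(u ⬝ᵥ N *ᵥ u)) ^ 2 := by
  rw [sub_dotProduct, smul_dotProduct, dotProduct_mulVec_sub_projection hN hu.ne', mulVec_sub,
    mulVec_smul, dotProduct_sub, dotProduct_smul, div_pow, Real.sq_sqrt hu.le]
  simp only [smul_eq_mul]
  ring

end GramSchmidt

namespace IsGaussianDesign

variable {Ω ι m o : Type*} [MeasurableSpace Ω] [Fintype m] [DecidableEq m] [Fintype o]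
  {μ : Measure Ω} {X : ι → Ω → m ⊕ o → ℝ}
  {Γ : Matrix (m ⊕ o) (m ⊕ o) ℝ}

lemma map_regressionResidual [Fintype ι] (hX : IsGaussianDesign X Γ μ)
    (hA : IsUnit Γ.toBlocks₁₁.det) (u : o → ℝ) :
    μ.map (fun ω i => X i ω ⬝ᵥ regressionResidual Γ u) =
      Measure.pi fun _ => gaussianReal 0 (u ⬝ᵥ schurComplement Γ *ᵥ u).toNNReal := by
  rw [hX.map_dotProduct, regressionResidual_dotProduct_mulVec hA]

lemma indepFun_regressionResidual [Finite ι] (hX : IsGaussianDesign X Γ μ)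
    (hA : IsUnit Γ.toBlocks₁₁.det) {u v : o → ℝ} (huv : u ⬝ᵥ schurComplement Γ *ᵥ v = 0) :
    IndepFun (fun ω i => X i ω ⬝ᵥ regressionResidual Γ v)
      (fun ω => (fun i k => X i ω (.inl k), fun i => X i ω ∘ Sum.inr ⬝ᵥ u)) μ := by
  let w : m ⊕ Unit → m ⊕ o → ℝ :=
    Sum.elim (fun k => Sum.elim (Pi.single k 1) 0) fun _ => Sum.elim 0 u
  have horth : ∀ t, w t ⬝ᵥ Γ *ᵥ regressionResidual Γ v = 0 := by
    rw [mulVec_regressionResidual hA]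
    rintro (k | -) <;> simp [w, sumElim_dotProduct_sumElim, huv]
  let regroup (y : ι × (m ⊕ Unit) → ℝ) : (ι → m → ℝ) × (ι → ℝ) :=
    (fun i k => y (i, .inl k), fun i => y (i, .inr ()))
  have hregroup : Measurable regroup := by fun_prop
  simpa [Function.comp_def, regroup, w, dotProduct_sumElim] using
    (hX.indepFun_dotProduct horth).comp measurable_id hregroup

lemma map_standardized_regressionResidual [Fintype ι]
    (hX : IsGaussianDesign X Γ μ) (hA : IsUnit Γ.toBlocks₁₁.det) {u : o → ℝ}
    (hu : 0 < u ⬝ᵥ schurComplement Γ *ᵥ u) :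
    μ.map (fun ω i =>
        (√(u ⬝ᵥ schurComplement Γ *ᵥ u))⁻¹ * X i ω ⬝ᵥ regressionResidual Γ u) =
      Measure.pi fun _ => gaussianReal 0 1 := by
  have hvar : (√(u ⬝ᵥ schurComplement Γ *ᵥ u))⁻¹ * ((√(u ⬝ᵥ schurComplement Γ *ᵥ u))⁻¹ *
      u ⬝ᵥ schurComplement Γ *ᵥ u) = 1 := by
    rw [← mul_assoc, ← mul_inv, Real.mul_self_sqrt hu.le, inv_mul_cancel₀ hu.ne']
  simpa [dotProduct_smul, smul_dotProduct, mulVec_smul, hvar,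
    regressionResidual_dotProduct_mulVec hA] using
    hX.map_dotProduct ((√(u ⬝ᵥ schurComplement Γ *ᵥ u))⁻¹ • regressionResidual Γ u)

theorem exists_conditional_decomposition [Fintype ι]
    (hX : IsGaussianDesign X Γ μ) (hA : IsUnit Γ.toBlocks₁₁.det) {u : o → ℝ} (v : o → ℝ)
    (hu : 0 < u ⬝ᵥ schurComplement Γ *ᵥ u) {b : ℝ}
    (hb : b = (v ⬝ᵥ schurComplement Γ *ᵥ u) / √(u ⬝ᵥ schurComplement Γ *ᵥ u)) :
    ∃ W Z : ι → Ω → ℝ,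
      (∀ i ω, X i ω ∘ Sum.inr ⬝ᵥ v =
        X i ω ∘ Sum.inl ⬝ᵥ Γ.toBlocks₁₁⁻¹ *ᵥ Γ.toBlocks₁₂ *ᵥ v + b * W i ω + Z i ω) ∧
      μ.map (fun ω i => W i ω) = Measure.pi (fun _ => gaussianReal 0 1) ∧
      μ.map (fun ω i => Z i ω) = Measure.pi (fun _ =>
        gaussianReal 0 (v ⬝ᵥ schurComplement Γ *ᵥ v - b ^ 2).toNNReal) ∧
      (∃ f : (ι → m → ℝ) × (ι → ℝ) → ι → ℝ, Measurable f ∧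
        ∀ ω, (fun i => W i ω) =
          f (fun i k => X i ω (.inl k), fun i => X i ω ∘ Sum.inr ⬝ᵥ u)) ∧
      IndepFun (fun ω i => Z i ω)
        (fun ω => (fun i k => X i ω (.inl k), fun i => X i ω ∘ Sum.inr ⬝ᵥ u)) μ := by
  have hN := isSymm_schurComplement hX.isSymm
  set d := u ⬝ᵥ schurComplement Γ *ᵥ u
  set c := (v ⬝ᵥ schurComplement Γ *ᵥ u) / d with hc
  have hbc : b * (√d)⁻¹ = c := by
    rw [hb, hc, ← div_eq_mul_inv, div_div, Real.mul_self_sqrt hu.le]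
  refine ⟨fun i ω => (√d)⁻¹ * X i ω ⬝ᵥ regressionResidual Γ u,
    fun i ω => X i ω ⬝ᵥ regressionResidual Γ (v - c • u), fun i ω => ?_,
    hX.map_standardized_regressionResidual hA hu, ?_,
    ⟨fun y i => (√d)⁻¹ * (y.2 i - y.1 i ⬝ᵥ Γ.toBlocks₁₁⁻¹ *ᵥ Γ.toBlocks₁₂ *ᵥ u),
      ?_, fun ω => ?_⟩, ?_⟩
  · rw [← mul_assoc, hbc]
    simp only [dotProduct_regressionResidual, mulVec_sub, mulVec_smul, dotProduct_sub,
      dotProduct_smul, smul_eq_mul]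
    ring
  · rw [hX.map_regressionResidual hA, sub_projection_dotProduct_mulVec_self hN hu, hb]
  · unfold dotProduct
    fun_prop
  · simp only [dotProduct_regressionResidual]
    rfl
  · exact hX.indepFun_regressionResidual hA (dotProduct_mulVec_sub_projection hN hu.ne' v)

end IsGaussianDesign

theorem IsGaussianDesign.exists_conditional_decomposition_add_noise {Ω ι m o : Type*}
    [MeasurableSpace Ω] [Fintype ι] [Fintype m] [DecidableEq m] [Fintype o] {μ : Measure Ω}
    {X : ι → Ω → m ⊕ o → ℝ} {ε : ι → Ω → ℝ} {Γ : Matrix (m ⊕ o) (m ⊕ o) ℝ} {s : ℝ}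
    (hX : IsGaussianDesign (fun i ω => Sum.elim (X i ω) fun _ : Unit => ε i ω)
      (fromBlocks Γ 0 0 (s • 1)) μ)
    (hA : IsUnit Γ.toBlocks₁₁.det) (β : o → ℝ) (j : o) {d b : ℝ}
    (hd : d = s + β ⬝ᵥ schurComplement Γ *ᵥ β) (hdpos : 0 < d)
    (hb : b = (schurComplement Γ *ᵥ β) j / √d) :
    ∃ W Z : ι → Ω → ℝ,
      (∀ i ω, X i ω (.inr j) =
        X i ω ∘ Sum.inl ⬝ᵥ (Γ.toBlocks₁₁⁻¹ *ᵥ fun k => Γ (.inl k) (.inr j)) + b * W i ω + Z i ω) ∧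
      μ.map (fun ω i => W i ω) = Measure.pi (fun _ => gaussianReal 0 1) ∧
      μ.map (fun ω i => Z i ω) =
        Measure.pi (fun _ => gaussianReal 0 (schurComplement Γ j j - b ^ 2).toNNReal) ∧
      (∃ f : (ι → m → ℝ) × (ι → ℝ) → ι → ℝ, Measurable f ∧ ∀ ω, (fun i => W i ω) =
        f (fun i k => X i ω (.inl k), fun i => X i ω ∘ Sum.inr ⬝ᵥ β + ε i ω)) ∧
      IndepFun (fun ω i => Z i ω)
        (fun ω => (fun i k => X i ω (.inl k), fun i => X i ω ∘ Sum.inr ⬝ᵥ β + ε i ω)) μ := by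
  classical
  have hdesign := hX.comp_right (Equiv.sumAssoc m o Unit).symm
  set Γ' := (fromBlocks Γ 0 0 (s • 1)).submatrix (Equiv.sumAssoc m o Unit).symm
    (Equiv.sumAssoc m o Unit).symm
  let u : o ⊕ Unit → ℝ := Sum.elim β 1
  let v : o ⊕ Unit → ℝ := Sum.elim (Pi.single j 1) 0
  have hN : schurComplement Γ' = fromBlocks (schurComplement Γ) 0 0 (s • 1) :=
    schurComplement_submatrix_sumAssoc _
  have huu : u ⬝ᵥ schurComplement Γ' *ᵥ u = d := by
    simp [hN, u, hd, fromBlocks_mulVec, smul_mulVec, add_comm]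
  have hvu : v ⬝ᵥ schurComplement Γ' *ᵥ u = (schurComplement Γ *ᵥ β) j := by
    simp [hN, u, v, fromBlocks_mulVec]
  have hvv : v ⬝ᵥ schurComplement Γ' *ᵥ v = schurComplement Γ j j := by
    simp [hN, v]
  obtain ⟨W, Z, hdec, hW, hZ, hf, hind⟩ := hdesign.exists_conditional_decomposition (u := u)
    hA v (huu ▸ hdpos) (b := b) (by rw [hvu, huu, hb])
  have hrow_u : ∀ i ω, (Sum.elim (X i ω) (fun _ : Unit => ε i ω) ∘
      (Equiv.sumAssoc m o Unit).symm) ∘ Sum.inr ⬝ᵥ u = X i ω ∘ Sum.inr ⬝ᵥ β + ε i ω :=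
    fun i ω => by simp [u, dotProduct_sumElim, Function.comp_def]
  have hrow_v : ∀ i ω, (Sum.elim (X i ω) (fun _ : Unit => ε i ω) ∘
      (Equiv.sumAssoc m o Unit).symm) ∘ Sum.inr ⬝ᵥ v = X i ω (.inr j) :=
    fun i ω => by simp [v, Function.comp_def]
  have hcol : Γ'.toBlocks₁₂ *ᵥ v = fun k => Γ (.inl k) (.inr j) := by
    ext k
    simp [v, mulVec, toBlocks₁₂, Γ']
  simp only [hrow_u] at hf hind
  refine ⟨W, Z, fun i ω => ?_, hW, hvv ▸ hZ, hf, hind⟩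
  rw [← hrow_v, hdec, hcol]
  rfl

theorem gaussian_conditional_decomposition_general {Ω ι κ : Type*} [MeasurableSpace Ω]
    [Fintype ι] [Fintype κ] [DecidableEq κ] (μ : Measure Ω)
    (Sig : Matrix κ κ ℝ) (σ : ℝ) (X : Ω → Matrix ι κ ℝ) (ε : ι → Ω → ℝ)
    (hdesign : IsGaussianDesign (fun i ω => Sum.elim (X ω i) fun _ : Unit => ε i ω)
      (fromBlocks Sig 0 0 (σ ^ 2 • 1)) μ)
    (β : κ → ℝ) (S : Finset κ) (j : κ) (hj : j ∉ S)
    (epst : ι → Ω → ℝ) (hepst : ∀ i ω, epst i ω = (∑ j' ∈ Sᶜ, X ω i j' * β j') + ε i ω)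
    (Ass : Matrix S S ℝ) (hAss : Ass = Sig.submatrix (↑) (↑)) (hAss_unit : IsUnit Ass.det)
    (N : Matrix ↥(Sᶜ : Finset κ) ↥(Sᶜ : Finset κ) ℝ)
    (hN : N = Sig.submatrix (↑) (↑) -
      Sig.submatrix (↑) ((↑) : S → κ) * Ass⁻¹ * Sig.submatrix (↑) (↑))
    (βSc : ↥(Sᶜ : Finset κ) → ℝ) (hβSc : ∀ l, βSc l = β l)
    (aj : S → ℝ) (haj : aj = Ass⁻¹ *ᵥ fun i : S => Sig i j)
    (d : ℝ) (hd : d = σ ^ 2 + βSc ⬝ᵥ N *ᵥ βSc) (hdpos : 0 < d)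
    (bj : ℝ) (hbj : bj = (N *ᵥ βSc) ⟨j, Finset.mem_compl.mpr hj⟩ / √d)
    (sigtjj : ℝ) (hsigtjj : sigtjj = Sig j j - aj ⬝ᵥ Ass *ᵥ aj - bj ^ 2) :
    ∃ W Z : ι → Ω → ℝ,
      (∀ i ω, X ω i j = (∑ l : S, X ω i l * aj l) + bj * W i ω + Z i ω) ∧
      sigtjj ≤ Sig j j ∧
      μ.map (fun ω i => W i ω) = Measure.pi (fun _ => gaussianReal 0 1) ∧
      μ.map (fun ω i => Z i ω) = Measure.pi (fun _ => gaussianReal 0 sigtjj.toNNReal) ∧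
      (∃ f : (ι → S → ℝ) × (ι → ℝ) → ι → ℝ, Measurable f ∧
        ∀ ω, (fun i => W i ω) = f (fun i l => X ω i l, fun i => epst i ω)) ∧
      IndepFun (fun ω i => Z i ω) (fun ω => (fun i (l : S) => X ω i l, fun i => epst i ω)) μ := by
  let g : S ⊕ ↥(Sᶜ : Finset κ) → κ := Sum.elim (↑) (↑)
  have hblocks : IsGaussianDesign
      (fun i ω => Sum.elim (X ω i ∘ g) fun _ : Unit => ε i ω)
      (fromBlocks (Sig.submatrix g g) 0 0 (σ ^ 2 • 1)) μ := by
    convert hdesign.comp_right (Sum.map g id) using 1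
    · ext i ω (k | k) <;> rfl
    · ext (k | k) (l | l) <;> rfl
  have hΓ : (Sig.submatrix g g).PosSemidef := hblocks.posSemidef.submatrix Sum.inl
  have hsymm : (Sig.submatrix g g).IsSymm := hblocks.isSymm.submatrix Sum.inl
  have hA : Ass = (Sig.submatrix g g).toBlocks₁₁ := hAss
  have hschur : N = schurComplement (Sig.submatrix g g) := by rw [hN, hAss]; rfl
  have hNjj : N ⟨j, Finset.mem_compl.2 hj⟩ ⟨j, Finset.mem_compl.2 hj⟩ =
      Sig j j - aj ⬝ᵥ Ass *ᵥ aj := by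
    rw [hschur, schurComplement_apply_self (hA ▸ hAss_unit) hsymm (hA ▸ haj), hA]
    rfl
  have hepst_block : ∀ i ω,
      epst i ω = (X ω i ∘ g) ∘ Sum.inr ⬝ᵥ βSc + ε i ω := fun i ω => by
    rw [hepst, ← Finset.sum_coe_sort, funext hβSc]
    rfl
  have hquad : 0 ≤ aj ⬝ᵥ Ass *ᵥ aj := by
    rw [hA]
    exact (hΓ.submatrix Sum.inl).dotProduct_mulVec_nonneg aj
  obtain ⟨W, Z, hdec, hW, hZ, hf, hind⟩ :=
    hblocks.exists_conditional_decomposition_add_noise (hA ▸ hAss_unit) βSc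
      ⟨j, Finset.mem_compl.2 hj⟩ (hschur ▸ hd) hdpos (hschur ▸ hbj)
  refine ⟨W, Z, fun i ω => ?_, ?_, hW, ?_, ?_, ?_⟩
  · rw [haj, hA]
    exact hdec i ω
  · linarith [sq_nonneg bj]
  · rw [hsigtjj, ← hNjj, hschur]
    exact hZ
  · simp only [hepst_block]
    exact hf
  · simp only [hepst_block]
    exact hind

/-- Gaussian conditional-distribution decomposition: let `X = U B` be an `n × p`
Gaussian design (rows i.i.d. `N(0, Σ)` with `Σ = BᵀB`), `ε ~ N(0, σ² I_n)` independent
of `X` (all built from a family `V` of i.i.d. standard Gaussians), and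
`ε̃ = X_{Sᶜ} β_{Sᶜ} + ε`. Then for `j ∉ S` there exist `W, Z` with
`X_j = X_S a_j + b_j W + Z` where `a_j = Σ_{SS}⁻¹ Σ_{Sj}`,
`b_j = e_jᵀ Σ_{Sᶜ|S} β_{Sᶜ}/√d`, `d = σ² + β_{Sᶜ}ᵀ Σ_{Sᶜ|S} β_{Sᶜ}`; `W ~ N(0, I_n)` is
a measurable function of `(X_S, ε̃)`, and `Z ~ N(0, σ̃_jj I_n)` is independent of
`(X_S, ε̃)`, with `σ̃_jj = Σ_jj − a_jᵀ Σ_{SS} a_j − b_j² ≤ Σ_jj`. -/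
theorem gaussian_conditional_decomposition {Ω : Type*} [MeasurableSpace Ω]
    (μ : Measure Ω) [IsProbabilityMeasure μ] {n p : ℕ}
    (V : (Fin n × Fin p) ⊕ Fin n → Ω → ℝ)
    (hlaw : Measure.map (fun ω => fun q => V q ω) μ =
      Measure.pi fun _ : (Fin n × Fin p) ⊕ Fin n => gaussianReal 0 1)
    (Sig B : Matrix (Fin p) (Fin p) ℝ) (hpd : Sig.PosDef) (hB : Bᵀ * B = Sig)
    (σ : ℝ) (hσ : 0 < σ) (β : Fin p → ℝ)
    (S : Finset (Fin p)) (j : Fin p) (hj : j ∉ S)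
    (X : Ω → Matrix (Fin n) (Fin p) ℝ)
    (hX : ∀ ω, X ω = (Matrix.of fun i l => V (Sum.inl (i, l)) ω) * B)
    (epst : Fin n → Ω → ℝ)
    (hepst : ∀ i ω, epst i ω = (∑ j' ∈ Sᶜ, X ω i j' * β j') + σ * V (Sum.inr i) ω)
    (Ass : Matrix ↥S ↥S ℝ)
    (hAss : Ass = Sig.submatrix (fun i : ↥S => (i : Fin p)) (fun i : ↥S => (i : Fin p)))
    (N : Matrix ↥(Sᶜ : Finset (Fin p)) ↥(Sᶜ : Finset (Fin p)) ℝ)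
    (hN : N = Sig.submatrix (fun i : ↥(Sᶜ : Finset (Fin p)) => (i : Fin p))
            (fun l : ↥(Sᶜ : Finset (Fin p)) => (l : Fin p)) -
          Sig.submatrix (fun i : ↥(Sᶜ : Finset (Fin p)) => (i : Fin p))
            (fun l : ↥S => (l : Fin p)) * Ass⁻¹ *
          Sig.submatrix (fun i : ↥S => (i : Fin p))
            (fun l : ↥(Sᶜ : Finset (Fin p)) => (l : Fin p)))
    (βSc : ↥(Sᶜ : Finset (Fin p)) → ℝ) (hβSc : ∀ l, βSc l = β (l : Fin p))
    (aj : ↥S → ℝ) (haj : aj = Ass⁻¹.mulVec fun i : ↥S => Sig (i : Fin p) j)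
    (d : ℝ) (hd : d = σ ^ 2 + βSc ⬝ᵥ N.mulVec βSc)
    (bj : ℝ) (hbj : bj = (N.mulVec βSc) ⟨j, Finset.mem_compl.mpr hj⟩ / Real.sqrt d)
    (sigtjj : ℝ) (hsigtjj : sigtjj = Sig j j - aj ⬝ᵥ Ass.mulVec aj - bj ^ 2) :
    ∃ W Z : Fin n → Ω → ℝ,
      (∀ i ω, X ω i j = (∑ l : ↥S, X ω i (l : Fin p) * aj l) + bj * W i ω + Z i ω) ∧
      sigtjj ≤ Sig j j ∧
      Measure.map (fun ω => fun i => W i ω) μ =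
        (Measure.pi fun _ : Fin n => gaussianReal 0 1) ∧
      Measure.map (fun ω => fun i => Z i ω) μ =
        (Measure.pi fun _ : Fin n => gaussianReal 0 (Real.toNNReal sigtjj)) ∧
      (∃ f : ((Fin n → ↥S → ℝ) × (Fin n → ℝ)) → (Fin n → ℝ), Measurable f ∧
        ∀ ω, (fun i => W i ω) =
          f (fun i (l : ↥S) => X ω i (l : Fin p), fun i => epst i ω)) ∧
      IndepFun (fun ω => fun i => Z i ω)
        (fun ω => ((fun i (l : ↥S) => X ω i (l : Fin p)), fun i => epst i ω)) μ := by
  have hdesign := isGaussianDesign_linearModel_of_map_eq_pi hlaw B σ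
  simp only [hB, ← hX] at hdesign
  have hunit : IsUnit (Sig.submatrix (Subtype.val : S → Fin p) Subtype.val).det :=
    (hpd.submatrix Subtype.val_injective).det_pos.ne'.isUnit
  have hN_psd : N.PosSemidef := by
    rw [hN, hAss]
    exact posSemidef_schurComplement (hpd.posSemidef.submatrix (Sum.elim Subtype.val Subtype.val))
      hunit
  have hdpos : 0 < d :=
    hd ▸ add_pos_of_pos_of_nonneg (pow_pos hσ 2) (hN_psd.dotProduct_mulVec_nonneg βSc)
  exact gaussian_conditional_decomposition_general μ Sig σ X _ hdesign β S j hj epst hepst Ass hAss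
    (hAss ▸ hunit) N hN βSc hβSc aj haj d hd hdpos bj hbj sigtjj hsigtjj
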